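/- Fix real constants D_loss ≥ 0, D_conf > 0, α > 0, ε_M with 0 ≤ ε_M < 1, and C > 0, V > 0, d_K > 0. Then the function n_K ↦ ε_M·D_loss + α·(1 − ε_M)·Q((ln 2)·√(n_K/V)·(C − d_K/n_K))·D_conf is strictly decreasing on (0, ∞). -/

import Mathlib

/-- The Gaussian Q-function `Q(x) = (1/√(2π)) ∫_x^∞ e^{−t²/2} dt`. -/
noncomputable def gaussQ (x : ℝ) : ℝ :=
  (Real.sqrt (2 * Real.pi))⁻¹ * ∫ t in Set.Ioi x, Real.exp (-t ^ 2 / 2)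

theorem integrable_exp_neg_sq_div_two :
    MeasureTheory.Integrable (fun t : ℝ => Real.exp (-t ^ 2 / 2)) := by
  convert integrable_exp_neg_mul_sq (b := 1 / 2) (by norm_num) using 3
  ring

theorem gaussQ_strictAnti : StrictAnti gaussQ := by
  intro x y hxy
  have hsub := intervalIntegral.integral_Ioi_sub_Ioi
    (integrable_exp_neg_sq_div_two.integrableOn (s := Set.Ioi x)) hxy.le
  have hpos : 0 < ∫ t in x..y, Real.exp (-t ^ 2 / 2) :=
    intervalIntegral.intervalIntegral_pos_of_pos
      integrable_exp_neg_sq_div_two.intervalIntegrable (fun _ => Real.exp_pos _) hxy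
  unfold gaussQ
  have hc : 0 < (Real.sqrt (2 * Real.pi))⁻¹ := by positivity
  exact mul_lt_mul_of_pos_left (by linarith) hc

theorem strictMonoOn_sqrt_div_mul_sub_div {C V d : ℝ} (hC : 0 < C) (hV : 0 < V) (hd : 0 ≤ d) :
    StrictMonoOn (fun n : ℝ => Real.sqrt (n / V) * (C - d / n)) (Set.Ioi 0) := by
  have key : ∀ n : ℝ, 0 < n →
      Real.sqrt (n / V) * (C - d / n) = C * Real.sqrt (n / V) - d / V / Real.sqrt (n / V) := by
    intro n hn
    have hs : 0 < Real.sqrt (n / V) := Real.sqrt_pos.2 (div_pos hn hV)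
    have hsq : n = V * Real.sqrt (n / V) ^ 2 := by
      rw [Real.sq_sqrt (div_pos hn hV).le]
      field_simp
    generalize Real.sqrt (n / V) = s at hs hsq
    subst hsq
    field_simp
  intro a (ha : 0 < a) b (hb : 0 < b) hab
  have hlt : Real.sqrt (a / V) < Real.sqrt (b / V) :=
    Real.sqrt_lt_sqrt (div_pos ha hV).le (by gcongr)
  have hs : 0 < Real.sqrt (a / V) := Real.sqrt_pos.2 (div_pos ha hV)
  have hdiv : d / V / Real.sqrt (b / V) ≤ d / V / Real.sqrt (a / V) := by gcongr
  have hmul := mul_lt_mul_of_pos_left hlt hC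
  simp only [key a ha, key b hb]
  linarith

/-- With `D_loss ≥ 0`, `D_conf > 0`, `α > 0`, `0 ≤ ε_M < 1` and `C, V, d_K > 0`,
the function `n_K ↦ ε_M·D_loss + α·(1 − ε_M)·Q((ln 2)·√(n_K/V)·(C − d_K/n_K))·D_conf`
is strictly decreasing on `(0, ∞)`. -/
theorem distortion_strictAntiOn_key_blocklength
    (Dloss Dconf α εM C V dK : ℝ)
    (hDloss : 0 ≤ Dloss) (hDconf : 0 < Dconf) (hα : 0 < α)
    (hεM0 : 0 ≤ εM) (hεM1 : εM < 1)
    (hC : 0 < C) (hV : 0 < V) (hdK : 0 < dK) :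
    StrictAntiOn
      (fun nK : ℝ => εM * Dloss +
        α * (1 - εM) * gaussQ (Real.log 2 * Real.sqrt (nK / V) * (C - dK / nK)) * Dconf)
      (Set.Ioi 0) := by
  intro a ha b hb hab
  have harg := mul_lt_mul_of_pos_left
    (strictMonoOn_sqrt_div_mul_sub_div hC hV hdK.le ha hb hab) (Real.log_pos one_lt_two)
  have hQ := gaussQ_strictAnti harg
  simp only [← mul_assoc] at hQ
  have hε : 0 < 1 - εM := sub_pos.2 hεM1
  dsimp only
  gcongr
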